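/- arXiv:2305.09339 — 6 statements merged into one kernel-verified Lean document; each statement's English description precedes it below -/
import Mathlib

section
/- Let ν > 0, and let ρ : ℝ × ℝ³ → ℝ and u : ℝ × ℝ³ → ℝ³ be C² functions with ρ > 0 everywhere, satisfying the continuity equation ∂_t ρ + div(ρ u) = 0. Define the drift velocity v = 2ν ∇(log ρ) (spatial gradient). Then the 'augmented velocity' equation for v holds pointwise: ∂_t(ρ v) + div(ρ v ⊗ u) + 2ν div(ρ ∇ᵀu) = 0, where ∇ᵀu is the transposed Jacobian, (∇ᵀu)_{ij} = ∂_i u_j. -/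
open scoped BigOperators
open MeasureTheory

noncomputable section

/-- Points of `ℝ³`, realized as `Fin 3 → ℝ`. -/
abbrev V3 : Type := Fin 3 → ℝ

/-- Partial derivative `∂ᵢ f` of a scalar field. -/
def pd (i : Fin 3) (f : V3 → ℝ) (x : V3) : ℝ := fderiv ℝ f x (Pi.single i 1)

/-- Gradient `∇f` of a scalar field. -/
def grad (f : V3 → ℝ) (x : V3) : V3 := fun i => pd i f x

/-- Divergence `div u` of a vector field. -/
def vdiv (u : V3 → V3) (x : V3) : ℝ := ∑ i, pd i (fun y => u y i) x

/-- Laplacian `Δf` of a scalar field. -/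
def lap (f : V3 → ℝ) (x : V3) : ℝ := ∑ i, pd i (fun y => pd i f y) x

/-- Divergence (row-wise) of a matrix field: `(div M)_i = ∑_j ∂_j M_{ij}`. -/
def mdiv (M : V3 → Fin 3 → Fin 3 → ℝ) (x : V3) : V3 :=
  fun i => ∑ j, pd j (fun y => M y i j) x

/-- Jacobian matrix `(∇u)_{ij} = ∂_j u_i` of a vector field. -/
def jacb (u : V3 → V3) (x : V3) : Fin 3 → Fin 3 → ℝ := fun i j => pd j (fun y => u y i) x

/-- Symmetric part `Du = (∇u + ∇ᵀu)/2` of the Jacobian. -/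
def symJ (u : V3 → V3) (x : V3) : Fin 3 → Fin 3 → ℝ :=
  fun i j => (jacb u x i j + jacb u x j i) / 2

/-- Antisymmetric part `Au = (∇u − ∇ᵀu)/2` of the Jacobian. -/
def asymJ (u : V3 → V3) (x : V3) : Fin 3 → Fin 3 → ℝ :=
  fun i j => (jacb u x i j - jacb u x j i) / 2

/-- Euclidean dot product on `ℝ³`. -/
def dot (a b : V3) : ℝ := ∑ i, a i * b i

/-- Squared Euclidean norm on `ℝ³`. -/
def normSq (a : V3) : ℝ := ∑ i, (a i) ^ 2

def DD (w : ℝ × V3) (f : ℝ × V3 → ℝ) (p : ℝ × V3) : ℝ := fderiv ℝ f p w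

lemma pd_slice (f : ℝ × V3 → ℝ) (hf : Differentiable ℝ f) (t : ℝ) (x : V3) (i : Fin 3) :
    pd i (fun y => f (t, y)) x = DD (0, Pi.single i 1) f (t, x) := by
  have h := (hf (t, x)).hasFDerivAt.comp x (hasFDerivAt_prodMk_right t x)
  have h2 : fderiv ℝ (fun y => f (t, y)) x = _ := h.fderiv
  unfold pd DD
  rw [h2]
  simp

lemma deriv_slice (f : ℝ × V3 → ℝ) (hf : Differentiable ℝ f) (t : ℝ) (x : V3) :
    deriv (fun s => f (s, x)) t = DD (1, 0) f (t, x) := by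
  have h := (hf (t, x)).hasFDerivAt.comp t (hasFDerivAt_prodMk_left (𝕜 := ℝ) t x)
  have h2 : deriv (fun s => f (s, x)) t = _ := h.hasDerivAt.deriv
  unfold DD
  rw [h2]
  simp

lemma DD_diff (w : ℝ × V3) (f : ℝ × V3 → ℝ) (hf : ContDiff ℝ 2 f) :
    Differentiable ℝ (DD w f) := by
  have h : ContDiff ℝ 1 (fderiv ℝ f) := hf.fderiv_right (by norm_num)
  exact (h.differentiable (by norm_num)).clm_apply (differentiable_const w)

lemma DD_swap (w z : ℝ × V3) (f : ℝ × V3 → ℝ) (hf : ContDiff ℝ 2 f) (p : ℝ × V3) :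
    DD w (DD z f) p = DD z (DD w f) p := by
  have h : ContDiff ℝ 1 (fderiv ℝ f) := hf.fderiv_right (by norm_num)
  have hd := h.differentiable (by norm_num)
  have key : ∀ a b : ℝ × V3, DD a (DD b f) p = fderiv ℝ (fderiv ℝ f) p a b := by
    intro a b
    have h1 := ((hd p).hasFDerivAt.clm_apply (hasFDerivAt_const b p)).fderiv
    have h2 : fderiv ℝ (DD b f) p = _ := h1
    rw [DD, h2]
    simp
  rw [key, key]
  have hs : IsSymmSndFDerivAt ℝ f p := hf.contDiffAt.isSymmSndFDerivAt (by simp)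
  exact hs.eq w z

lemma DD_mul (w : ℝ × V3) (f g : ℝ × V3 → ℝ) (hf : Differentiable ℝ f)
    (hg : Differentiable ℝ g) (p : ℝ × V3) :
    DD w (fun q => f q * g q) p = f p * DD w g p + g p * DD w f p := by
  have := ((hf p).hasFDerivAt.mul (hg p).hasFDerivAt).fderiv
  have h2 : fderiv ℝ (fun q => f q * g q) p = _ := this
  rw [DD, h2]
  simp [DD]

lemma DD_add (w : ℝ × V3) (f g : ℝ × V3 → ℝ) (hf : Differentiable ℝ f)
    (hg : Differentiable ℝ g) (p : ℝ × V3) :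
    DD w (fun q => f q + g q) p = DD w f p + DD w g p := by
  have := ((hf p).hasFDerivAt.add (hg p).hasFDerivAt).fderiv
  have h2 : fderiv ℝ (fun q => f q + g q) p = _ := this
  rw [DD, h2]
  simp [DD]

lemma DD_sum (w : ℝ × V3) (f : Fin 3 → ℝ × V3 → ℝ) (hf : ∀ j, Differentiable ℝ (f j))
    (p : ℝ × V3) :
    DD w (fun q => ∑ j, f j q) p = ∑ j, DD w (f j) p := by
  have h2 : fderiv ℝ (fun q => ∑ j, f j q) p = _ :=
    (HasFDerivAt.fun_sum (u := Finset.univ) fun j _ => (hf j p).hasFDerivAt).fderiv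
  rw [DD, h2]
  simp [DD]

/-- the drift velocity `v = 2ν ∇ log ρ` satisfies the augmented
equation `∂ₜ(ρv) + div(ρ v ⊗ u) + 2ν div(ρ ∇ᵀu) = 0`. -/
theorem augmented_drift_equation
    (ν : ℝ) (hν : 0 < ν)
    (ρ : ℝ → V3 → ℝ) (u : ℝ → V3 → V3)
    (hρ : ContDiff ℝ 2 (fun p : ℝ × V3 => ρ p.1 p.2))
    (hu : ContDiff ℝ 2 (fun p : ℝ × V3 => u p.1 p.2))
    (hpos : ∀ t x, 0 < ρ t x)
    (hcont : ∀ t x, deriv (fun s => ρ s x) t + vdiv (fun y => ρ t y • u t y) x = 0)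
    (v : ℝ → V3 → V3)
    (hv : ∀ t x, v t x = (2 * ν) • grad (fun y => Real.log (ρ t y)) x) :
    ∀ t x,
      (fun i => deriv (fun s => ρ s x * v s x i) t)
        + mdiv (fun y i j => ρ t y * v t y i * u t y j) x
        + (2 * ν) • mdiv (fun y i j => ρ t y * jacb (u t) y j i) x
      = 0 := by
  intro t x
  set R : ℝ × V3 → ℝ := fun p => ρ p.1 p.2 with hR
  let U : Fin 3 → ℝ × V3 → ℝ := fun j p => u p.1 p.2 j
  let e : Fin 3 → ℝ × V3 := fun j => (0, Pi.single j 1)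
  have hU : ∀ j, ContDiff ℝ 2 (U j) := fun j => contDiff_pi.1 hu j
  have hRd : Differentiable ℝ R := hρ.differentiable (by norm_num)
  have hUd : ∀ j, Differentiable ℝ (U j) := fun j => (hU j).differentiable (by norm_num)
  have hRU : ∀ j, ContDiff ℝ 2 (fun q => R q * U j q) := fun j => hρ.mul (hU j)
  have hRUd : ∀ j, Differentiable ℝ (fun q => R q * U j q) := fun j => hRd.mul (hUd j)
  have hC : (fun q => DD (1, 0) R q + ∑ j, DD (e j) (fun q => R q * U j q) q) = fun _ => 0 := by
    funext q
    obtain ⟨s, y⟩ := q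
    rw [← hcont s y, ← deriv_slice R hRd s y]
    simp only [vdiv]
    congr 1
    refine Finset.sum_congr rfl fun j _ => ?_
    exact (pd_slice _ (hRUd j) s y j).symm
  have hRv : ∀ s y i, ρ s y * v s y i = 2 * ν * DD (e i) R (s, y) := by
    intro s y i
    rw [hv, ← pd_slice R hRd s y i]
    have hd : DifferentiableAt ℝ (fun z => ρ s z) y :=
      (hRd.comp (differentiable_const s |>.prodMk differentiable_id)) y
    have hl : fderiv ℝ (fun z => Real.log (ρ s z)) y = _ :=
      (hd.hasFDerivAt.log (hpos s y).ne').fderiv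
    simp only [Pi.smul_apply, grad, pd, smul_eq_mul, hl, hR, smul_apply]
    have := (hpos s y).ne'
    field_simp
  funext i
  have hDi := DD_diff (e i) R hρ
  have hDU := fun j => DD_diff (e i) (U j) (hU j)
  have hCi : DD (e i) (DD (1, 0) R) (t, x)
      + ∑ j, DD (e i) (DD (e j) (fun q => R q * U j q)) (t, x) = 0 := by
    rw [← DD_sum _ _ (fun j => DD_diff _ _ (hRU j)), ← DD_add _ _ _ (DD_diff _ _ hρ)
      (Differentiable.fun_sum fun j _ => DD_diff _ _ (hRU j)), hC]
    simp [DD]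
  have h1 : deriv (fun s => ρ s x * v s x i) t = 2 * ν * DD (1, 0) (DD (e i) R) (t, x) := by
    simp only [hRv]
    rw [deriv_const_mul_field, deriv_slice _ hDi]
  have h2 : ∀ j, pd j (fun y => ρ t y * v t y i * u t y j) x
      = 2 * ν * DD (e j) (fun q => DD (e i) R q * U j q) (t, x) := by
    intro j
    simp only [hRv]
    have hd : Differentiable ℝ (fun q => DD (e i) R q * U j q) := hDi.mul (hUd j)
    have h3 := pd_slice (fun q => 2 * ν * (DD (e i) R q * U j q)) (hd.const_mul _) t x j
    rw [DD_mul _ _ _ (differentiable_const _) hd] at h3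
    simp only [mul_assoc] at h3 ⊢
    refine h3.trans ?_
    simp [DD, e]
  have h3 : ∀ j, pd j (fun y => ρ t y * jacb (u t) y j i) x
      = DD (e j) (fun q => R q * DD (e i) (U j) q) (t, x) := by
    intro j
    refine Eq.trans ?_ (pd_slice _ (hRd.fun_mul (hDU j)) t x j)
    congr 1
    funext y
    exact congrArg (fun z => ρ t y * z) (pd_slice _ (hUd j) t y i)
  have h4 : ∀ j, DD (e i) (DD (e j) (fun q => R q * U j q)) (t, x)
      = DD (e j) (fun q => DD (e i) R q * U j q) (t, x)
        + DD (e j) (fun q => R q * DD (e i) (U j) q) (t, x) := by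
    intro j
    rw [DD_swap _ _ _ (hRU j), ← DD_add _ _ _ (hDi.fun_mul (hUd j)) (hRd.fun_mul (hDU j))]
    congr 1
    funext q
    rw [DD_mul _ _ _ hRd (hUd j)]
    ring
  simp only [Pi.add_apply, Pi.smul_apply, Pi.zero_apply, smul_eq_mul, mdiv]
  rw [h1, Finset.sum_congr rfl fun j _ => h2 j, Finset.sum_congr rfl fun j _ => h3 j,
    DD_swap _ _ _ hρ, ← Finset.mul_sum]
  rw [Finset.sum_congr rfl fun j _ => h4 j, Finset.sum_add_distrib] at hCi
  linear_combination (2 * ν) * hCi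
end
end

section
/- Let ν > 0, κ > 0, γ > 1. Let ρ : ℝ × ℝ³ → ℝ and u : ℝ × ℝ³ → ℝ³ be C³ functions with ρ > 0 everywhere, satisfying pointwise the Navier–Stokes–Korteweg system: ∂_t ρ + div(ρ u) = 0 and ∂_t(ρ u) + div(ρ u ⊗ u) + ∇(ρ^γ) − 2ν div(ρ Du) − 2κ² ρ ∇(Δρ) = 0. Define v = 2ν ∇(log ρ) and the effective velocity w = u + v. Then w satisfies pointwise the augmented momentum equation ∂_t(ρ w) + div(ρ w ⊗ u) + ∇(ρ^γ) − 2ν div(ρ Au) − 2κ² ρ ∇(Δρ) = 0, and moreover Aw = Au (the antisymmetric parts of ∇w and ∇u coincide). -/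
open scoped BigOperators
open MeasureTheory

noncomputable section

lemma aux_symm {E : Type*} [NormedAddCommGroup E] [NormedSpace ℝ E] (F : E → ℝ)
    (hF : ContDiff ℝ 2 F) (a b p : E) :
    fderiv ℝ (fun q => fderiv ℝ F q a) p b = fderiv ℝ (fun q => fderiv ℝ F q b) p a := by
  have hd : DifferentiableAt ℝ (fderiv ℝ F) p :=
    ((hF.fderiv_right (m := 1) (by norm_num)).differentiable (by norm_num)) p
  have hs : IsSymmSndFDerivAt ℝ F p := hF.contDiffAt.isSymmSndFDerivAt (by simp)
  rw [fderiv_clm_apply hd (differentiableAt_const a),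
    fderiv_clm_apply hd (differentiableAt_const b)]
  simpa using hs b a

lemma aux_smooth {E : Type*} [NormedAddCommGroup E] [NormedSpace ℝ E] (F : E → ℝ)
    (n : ℕ) (hF : ContDiff ℝ (n + 1) F) (a : E) :
    ContDiff ℝ n (fun q => fderiv ℝ F q a) :=
  (hF.fderiv_right (m := n) le_rfl).clm_apply contDiff_const

lemma aux_pd_slice (i : Fin 3) (F : ℝ × V3 → ℝ) (hF : Differentiable ℝ F) (t : ℝ) (x : V3) :
    pd i (fun y => F (t, y)) x = fderiv ℝ F (t, x) (0, Pi.single i 1) := by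
  have h : HasFDerivAt (fun y : V3 => (t, y)) (ContinuousLinearMap.inr ℝ ℝ V3) x :=
    hasFDerivAt_prodMk_right t x
  have := (hF (t, x)).hasFDerivAt.comp x h
  unfold pd
  rw [show (fun y => F (t, y)) = F ∘ (fun y => (t, y)) from rfl, this.fderiv]
  simp

lemma aux_deriv_slice (F : ℝ × V3 → ℝ) (hF : Differentiable ℝ F) (t : ℝ) (x : V3) :
    deriv (fun s => F (s, x)) t = fderiv ℝ F (t, x) (1, 0) := by
  have h : HasFDerivAt (fun s : ℝ => (s, x)) (ContinuousLinearMap.inl ℝ ℝ V3) t :=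
    hasFDerivAt_prodMk_left t x
  have := (hF (t, x)).hasFDerivAt.comp t h
  rw [show (fun s => F (s, x)) = F ∘ (fun s => (s, x)) from rfl, this.hasDerivAt.deriv]
  simp

lemma aux_mixed (i : Fin 3) (F : ℝ × V3 → ℝ) (hF : ContDiff ℝ 2 F) (t : ℝ) (x : V3) :
    deriv (fun s => pd i (fun y => F (s, y)) x) t
      = pd i (fun y => deriv (fun s => F (s, y)) t) x := by
  have hd : Differentiable ℝ F := hF.differentiable (by norm_num)
  have hs : ∀ a, Differentiable ℝ (fun q => fderiv ℝ F q a) := fun a =>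
    (aux_smooth F 1 (by simpa [one_add_one_eq_two] using hF) a).differentiable (by norm_num)
  simp only [aux_pd_slice i F hd, aux_deriv_slice F hd]
  rw [aux_deriv_slice (fun q => fderiv ℝ F q (0, Pi.single i 1)) (hs _),
    aux_pd_slice i (fun q => fderiv ℝ F q (1, 0)) (hs _)]
  exact aux_symm F hF _ _ _

lemma aux_pd_comm (i j : Fin 3) (f : V3 → ℝ) (hf : ContDiff ℝ 2 f) (x : V3) :
    pd i (fun y => pd j f y) x = pd j (fun y => pd i f y) x :=
  aux_symm f hf _ _ _

lemma aux_pd_add (i : Fin 3) (f g : V3 → ℝ) (hf : Differentiable ℝ f)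
    (hg : Differentiable ℝ g) (x : V3) :
    pd i (fun y => f y + g y) x = pd i f x + pd i g x := by
  unfold pd
  rw [fderiv_fun_add (hf x) (hg x)]; rfl

lemma aux_pd_cmul (i : Fin 3) (c : ℝ) (f : V3 → ℝ) (hf : Differentiable ℝ f) (x : V3) :
    pd i (fun y => c * f y) x = c * pd i f x := by
  unfold pd
  rw [fderiv_const_mul (hf x)]; rfl

lemma aux_pd_mul (i : Fin 3) (f g : V3 → ℝ) (hf : Differentiable ℝ f)
    (hg : Differentiable ℝ g) (x : V3) :
    pd i (fun y => f y * g y) x = pd i f x * g x + f x * pd i g x := by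
  unfold pd
  rw [fderiv_fun_mul (hf x) (hg x)]; simp; ring

lemma aux_pd_sum (i : Fin 3) (f : Fin 3 → V3 → ℝ) (hf : ∀ j, Differentiable ℝ (f j)) (x : V3) :
    pd i (fun y => ∑ j, f j y) x = ∑ j, pd i (f j) x := by
  unfold pd
  rw [fderiv_fun_sum (fun j _ => hf j x)]; simp

lemma aux_pd_smooth (i : Fin 3) (f : V3 → ℝ) (n : ℕ) (hf : ContDiff ℝ (n + 1) f) :
    ContDiff ℝ n (fun y => pd i f y) := aux_smooth f n hf _

lemma aux_pd_log (i : Fin 3) (f : V3 → ℝ) (hf : Differentiable ℝ f) (hp : ∀ y, 0 < f y)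
    (x : V3) : f x * pd i (fun y => Real.log (f y)) x = pd i f x := by
  unfold pd
  rw [fderiv.log (hf x) (hp x).ne']
  simp [(hp x).ne']

/-- the effective velocity `w = u + 2ν ∇ log ρ` satisfies the
augmented momentum equation, and `Aw = Au`. -/
theorem augmented_momentum_equation
    (ν κ γ : ℝ) (hν : 0 < ν) (hκ : 0 < κ) (hγ : 1 < γ)
    (ρ : ℝ → V3 → ℝ) (u : ℝ → V3 → V3)
    (hρ : ContDiff ℝ 3 (fun p : ℝ × V3 => ρ p.1 p.2))
    (hu : ContDiff ℝ 3 (fun p : ℝ × V3 => u p.1 p.2))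
    (hpos : ∀ t x, 0 < ρ t x)
    (hcont : ∀ t x, deriv (fun s => ρ s x) t + vdiv (fun y => ρ t y • u t y) x = 0)
    (hmom : ∀ t x,
      (fun i => deriv (fun s => ρ s x * u s x i) t)
        + mdiv (fun y i j => ρ t y * u t y i * u t y j) x
        + grad (fun y => ρ t y ^ γ) x
        - (2 * ν) • mdiv (fun y i j => ρ t y * symJ (u t) y i j) x
        - (2 * κ ^ 2) • (ρ t x • grad (fun y => lap (ρ t) y) x)
      = 0)
    (v w : ℝ → V3 → V3)
    (hv : ∀ t x, v t x = (2 * ν) • grad (fun y => Real.log (ρ t y)) x)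
    (hw : ∀ t x, w t x = u t x + v t x) :
    (∀ t x,
      (fun i => deriv (fun s => ρ s x * w s x i) t)
        + mdiv (fun y i j => ρ t y * w t y i * u t y j) x
        + grad (fun y => ρ t y ^ γ) x
        - (2 * ν) • mdiv (fun y i j => ρ t y * asymJ (u t) y i j) x
        - (2 * κ ^ 2) • (ρ t x • grad (fun y => lap (ρ t) y) x)
      = 0)
    ∧ (∀ t x, asymJ (w t) x = asymJ (u t) x) := by
  have hR : ∀ t, ContDiff ℝ 3 (ρ t) := fun t =>
    hρ.comp (contDiff_const.prodMk contDiff_id : ContDiff ℝ 3 (fun y : V3 => (t, y)))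
  have hU : ∀ t j, ContDiff ℝ 3 (fun y => u t y j) := fun t j =>
    (contDiff_pi.1 hu j).comp
      (contDiff_const.prodMk contDiff_id : ContDiff ℝ 3 (fun y : V3 => (t, y)))
  have hRd : ∀ t, Differentiable ℝ (ρ t) := fun t => (hR t).differentiable (by norm_num)
  have hUd : ∀ t j, Differentiable ℝ (fun y => u t y j) :=
    fun t j => (hU t j).differentiable (by norm_num)
  have hR1 : ∀ t i, Differentiable ℝ (fun y => pd i (ρ t) y) := fun t i =>
    (aux_pd_smooth i _ 2 (by norm_num; exact hR t)).differentiable (by norm_num)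
  have hU1 : ∀ t i j, Differentiable ℝ (fun y => pd i (fun z => u t z j) y) := fun t i j =>
    (aux_pd_smooth i _ 2 (by norm_num; exact hU t j)).differentiable (by norm_num)
  have hL : ∀ t, ContDiff ℝ 3 (fun y => Real.log (ρ t y)) := fun t =>
    (hR t).log (fun y => (hpos t y).ne')
  have hL1 : ∀ t i, Differentiable ℝ (fun y => pd i (fun z => Real.log (ρ t z)) y) := fun t i =>
    (aux_pd_smooth i _ 2 (by norm_num; exact hL t)).differentiable (by norm_num)
  have hwi : ∀ t x i, w t x i = u t x i + 2 * ν * pd i (fun z => Real.log (ρ t z)) x := by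
    intro t x i
    rw [hw, hv]; simp [grad]
  have hρw : ∀ t x i, ρ t x * w t x i = ρ t x * u t x i + 2 * ν * pd i (ρ t) x := by
    intro t x i
    rw [hwi, ← aux_pd_log i (ρ t) (hRd t) (hpos t)]; ring
  refine ⟨fun t x => ?_, fun t x => ?_⟩
  · funext i
    have hm := congrFun (hmom t x) i
    simp only [mdiv, grad, Pi.add_apply, Pi.sub_apply, Pi.smul_apply, Pi.zero_apply,
      smul_eq_mul] at hm ⊢
    -- time derivative
    have hFt : ∀ i, DifferentiableAt ℝ (fun s => ρ s x * u s x i) t := by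
      intro i
      have h1 : ContDiff ℝ 3 (fun s : ℝ => (s, x)) := contDiff_id.prodMk contDiff_const
      have h2 : ContDiff ℝ 3 (fun s => ρ s x) := hρ.comp h1
      have h3 : ContDiff ℝ 3 (fun s => u s x i) := (contDiff_pi.1 hu i).comp h1
      exact (h2.mul h3).differentiable (by norm_num) t
    have hGt : DifferentiableAt ℝ (fun s => pd i (ρ s) x) t := by
      have h1 : ContDiff ℝ 2 (fun s : ℝ => (s, x)) := contDiff_id.prodMk contDiff_const
      have h2 : (fun s => pd i (ρ s) x)
          = fun s => fderiv ℝ (fun p : ℝ × V3 => ρ p.1 p.2) (s, x) (0, Pi.single i 1) := by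
        funext s
        exact aux_pd_slice i (fun p : ℝ × V3 => ρ p.1 p.2) (hρ.differentiable (by norm_num)) s x
      rw [h2]
      have h3 := aux_smooth (fun p : ℝ × V3 => ρ p.1 p.2) 2 (by norm_num; exact hρ)
        (0, Pi.single i 1)
      exact (h3.comp h1).differentiable (by norm_num) t
    have e1 : deriv (fun s => ρ s x * w s x i) t
        = deriv (fun s => ρ s x * u s x i) t + 2 * ν * deriv (fun s => pd i (ρ s) x) t := by
      simp only [hρw]
      rw [deriv_fun_add (hFt i) (hGt.const_mul _), deriv_const_mul _ hGt]
    have e2 : deriv (fun s => pd i (ρ s) x) t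
        = - ∑ j, pd j (fun y => pd i (ρ t) y * u t y j + ρ t y * pd i (fun z => u t z j) y) x := by
      have h := aux_mixed i (fun p : ℝ × V3 => ρ p.1 p.2) (hρ.of_le (by norm_num)) t x
      have h' : (fun y => deriv (fun s => ρ s y) t)
          = fun y => (-1) * ∑ j, pd j (fun z => ρ t z * u t z j) y := by
        funext y
        have := hcont t y
        simp only [vdiv, Pi.smul_apply, smul_eq_mul] at this
        linarith
      have hs : ∀ j, ContDiff ℝ 3 (fun z => ρ t z * u t z j) := fun j => (hR t).mul (hU t j)
      have hs1 : ∀ j, Differentiable ℝ (fun y => pd j (fun z => ρ t z * u t z j) y) := fun j =>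
        (aux_pd_smooth j _ 2 (by norm_num; exact hs j)).differentiable (by norm_num)
      refine h.trans ?_
      change pd i (fun y => deriv (fun s => ρ s y) t) x = _
      rw [h', aux_pd_cmul i _ _ (Differentiable.fun_sum fun j _ => hs1 j), aux_pd_sum i _ hs1,
        neg_one_mul]
      congr 1
      refine Finset.sum_congr rfl fun j _ => ?_
      rw [aux_pd_comm i j _ ((hs j).of_le (by norm_num))]
      congr 1
      funext y
      exact aux_pd_mul i _ _ (hRd t) (hUd t j) y
    have e3 : ∀ j, pd j (fun y => ρ t y * w t y i * u t y j) x
        = pd j (fun y => ρ t y * u t y i * u t y j) x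
          + 2 * ν * pd j (fun y => pd i (ρ t) y * u t y j) x := by
      intro j
      rw [← aux_pd_cmul j _ _ ((hR1 t i).fun_mul (hUd t j)),
        ← aux_pd_add j _ _ (((hRd t).fun_mul (hUd t i)).fun_mul (hUd t j))
          (((hR1 t i).fun_mul (hUd t j)).const_mul _)]
      congr 1
      funext y
      rw [hρw]; ring
    have hA : ∀ j, Differentiable ℝ (fun y => asymJ (u t) y i j) := fun j => by
      unfold asymJ jacb
      simp only [div_eq_mul_inv]
      exact ((hU1 t j i).fun_sub (hU1 t i j)).mul_const _
    have e4 : ∀ j, pd j (fun y => ρ t y * symJ (u t) y i j) x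
        = pd j (fun y => ρ t y * asymJ (u t) y i j) x
          + pd j (fun y => ρ t y * pd i (fun z => u t z j) y) x := by
      intro j
      rw [← aux_pd_add j _ _ ((hRd t).fun_mul (hA j)) ((hRd t).fun_mul (hU1 t i j))]
      congr 1
      funext y
      simp only [symJ, asymJ, jacb]; ring
    have e5 : ∀ j, pd j (fun y => pd i (ρ t) y * u t y j + ρ t y * pd i (fun z => u t z j) y) x
        = pd j (fun y => pd i (ρ t) y * u t y j) x
          + pd j (fun y => ρ t y * pd i (fun z => u t z j) y) x := fun j =>
      aux_pd_add j _ _ ((hR1 t i).fun_mul (hUd t j)) ((hRd t).fun_mul (hU1 t i j)) x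
    simp only [e4, Finset.sum_add_distrib] at hm
    rw [e1, e2]
    simp only [e3, e5, Finset.sum_add_distrib, ← Finset.mul_sum]
    linear_combination hm
  · funext i j
    have hj : ∀ i j, jacb (w t) x i j = jacb (u t) x i j
        + 2 * ν * pd j (fun y => pd i (fun z => Real.log (ρ t z)) y) x := by
      intro i j
      simp only [jacb, hwi]
      rw [aux_pd_add j _ _ (hUd t i) ((hL1 t i).const_mul _), aux_pd_cmul j _ _ (hL1 t i)]
    simp only [asymJ, hj]
    rw [aux_pd_comm i j _ ((hL t).of_le (by norm_num))]
    ring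
end
end

section
/- Let γ > 1 and set p(s) = s^γ for s > 0. Let ρ, r : Ω → ℝ be C¹ functions on an open set Ω ⊆ ℝ³ with ρ > 0 and r > 0 everywhere. Then the following pointwise identity holds on Ω: ρ (p'(ρ) ∇log ρ − p'(r) ∇log r) · (∇log ρ − ∇log r) = ρ p'(ρ) |∇log ρ − ∇log r|² + ∇[p(ρ) − p(r) − p'(r)(ρ − r)] · ∇log r − [ρ (p'(ρ) − p'(r)) − r p''(r)(ρ − r)] |∇log r|². -/
open scoped BigOperators
open MeasureTheory

noncomputable section

/-- pointwise identity for the pressure gradient term of the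
relative entropy, with `p(s) = s^γ`. -/
theorem pressure_gradient_identity
    (γ : ℝ) (hγ : 1 < γ)
    (Ω : Set V3) (hΩ : IsOpen Ω)
    (ρ r : V3 → ℝ)
    (hρ : ContDiffOn ℝ 1 ρ Ω) (hr : ContDiffOn ℝ 1 r Ω)
    (hρpos : ∀ x ∈ Ω, 0 < ρ x) (hrpos : ∀ x ∈ Ω, 0 < r x) :
    ∀ x ∈ Ω,
      ρ x * dot
          (fun i => γ * ρ x ^ (γ - 1) * grad (fun y => Real.log (ρ y)) x i
                  - γ * r x ^ (γ - 1) * grad (fun y => Real.log (r y)) x i)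
          (grad (fun y => Real.log (ρ y)) x - grad (fun y => Real.log (r y)) x)
      = ρ x * (γ * ρ x ^ (γ - 1))
            * normSq (grad (fun y => Real.log (ρ y)) x - grad (fun y => Real.log (r y)) x)
        + dot (grad (fun y => ρ y ^ γ - r y ^ γ - γ * r y ^ (γ - 1) * (ρ y - r y)) x)
              (grad (fun y => Real.log (r y)) x)
        - (ρ x * (γ * ρ x ^ (γ - 1) - γ * r x ^ (γ - 1))
            - r x * (γ * (γ - 1) * r x ^ (γ - 2)) * (ρ x - r x))
          * normSq (grad (fun y => Real.log (r y)) x) := by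
  intro x hx
  have hρd : DifferentiableAt ℝ ρ x :=
    (hρ.contDiffAt (hΩ.mem_nhds hx)).differentiableAt (by norm_num)
  have hrd : DifferentiableAt ℝ r x :=
    (hr.contDiffAt (hΩ.mem_nhds hx)).differentiableAt (by norm_num)
  have hρ0 := hρpos x hx
  have hr0 := hrpos x hx
  have h1 : ∀ i, grad (fun y => Real.log (ρ y)) x i = (ρ x)⁻¹ * fderiv ℝ ρ x (Pi.single i 1) := by
    intro i
    simp only [grad, pd]
    rw [(hρd.hasFDerivAt.log hρ0.ne').fderiv]
    simp
  have h2 : ∀ i, grad (fun y => Real.log (r y)) x i = (r x)⁻¹ * fderiv ℝ r x (Pi.single i 1) := by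
    intro i
    simp only [grad, pd]
    rw [(hrd.hasFDerivAt.log hr0.ne').fderiv]
    simp
  have h3 : ∀ i, grad (fun y => ρ y ^ γ - r y ^ γ - γ * r y ^ (γ - 1) * (ρ y - r y)) x i
      = γ * ρ x ^ (γ - 1) * fderiv ℝ ρ x (Pi.single i 1)
        - γ * r x ^ (γ - 1) * fderiv ℝ r x (Pi.single i 1)
        - (γ * r x ^ (γ - 1) * (fderiv ℝ ρ x (Pi.single i 1) - fderiv ℝ r x (Pi.single i 1))
          + (ρ x - r x) * (γ * ((γ - 1) * r x ^ (γ - 2) * fderiv ℝ r x (Pi.single i 1)))) := by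
    intro i
    have e : γ - 1 - 1 = γ - 2 := by ring
    have k1 := hρd.hasFDerivAt.rpow_const (p := γ) (Or.inl hρ0.ne')
    have k2 := hrd.hasFDerivAt.rpow_const (p := γ) (Or.inl hr0.ne')
    have k3 := hrd.hasFDerivAt.rpow_const (p := γ - 1) (Or.inl hr0.ne')
    have k := (k1.sub k2).sub ((k3.const_mul γ).mul (hρd.hasFDerivAt.sub hrd.hasFDerivAt))
    have k' : fderiv ℝ (fun y => ρ y ^ γ - r y ^ γ - γ * r y ^ (γ - 1) * (ρ y - r y)) x = _ :=
      k.fderiv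
    simp only [grad, pd]
    rw [k']
    simp [e]
  simp only [dot, normSq, Pi.sub_apply, h1, h2, h3, Fin.sum_univ_three]
  field_simp
  ring
end
end

section
/- Let γ > 1, p(s) = s^γ, H(s) = s^γ/(γ−1), and H(ρ|r) = H(ρ) − H(r) − H'(r)(ρ − r). Then for every 0 < a ≤ b there exists a constant C > 0 such that for all r ∈ [a,b] and all ρ ≥ 0: |ρ (p'(ρ) − p'(r)) − r p''(r)(ρ − r)| ≤ C · H(ρ|r). -/
open scoped BigOperators
open MeasureTheory

noncomputable section

/-- the quantity `ρ(p'(ρ) − p'(r)) − r p''(r)(ρ−r)` is controlled in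
absolute value by the relative entropy `H(ρ|r)`, uniformly for `r ∈ [a,b]`. -/
theorem relative_pressure_derivative_bound
    (γ : ℝ) (hγ : 1 < γ) :
    ∀ a b : ℝ, 0 < a → a ≤ b →
      ∃ C : ℝ, 0 < C ∧
        ∀ r ρ : ℝ, r ∈ Set.Icc a b → 0 ≤ ρ →
          |ρ * (γ * ρ ^ (γ - 1) - γ * r ^ (γ - 1))
              - r * (γ * (γ - 1) * r ^ (γ - 2)) * (ρ - r)|
            ≤ C * (ρ ^ γ / (γ - 1) - r ^ γ / (γ - 1)
                    - (γ * r ^ (γ - 1) / (γ - 1)) * (ρ - r)) := by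
  intro a b ha hab
  refine ⟨γ * (γ - 1), mul_pos (by linarith) (by linarith), ?_⟩
  intro r ρ hr hρ
  have hr0 : 0 < r := lt_of_lt_of_le ha hr.1
  have hg : γ - 1 ≠ 0 := by linarith
  have e1 : ρ * ρ ^ (γ - 1) = ρ ^ γ := by
    rcases hρ.eq_or_lt with h | h
    · rw [← h, Real.zero_rpow (by linarith : γ ≠ 0)]; simp
    · rw [Real.rpow_sub_one h.ne']; field_simp
  have e2 : r * r ^ (γ - 1) = r ^ γ := by
    rw [Real.rpow_sub_one hr0.ne']; field_simp
  have e3 : r * r ^ (γ - 2) = r ^ (γ - 1) := by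
    rw [show γ - 2 = (γ - 1) - 1 by ring, Real.rpow_sub_one hr0.ne' (γ - 1)]; field_simp
  have hB := one_add_mul_self_le_rpow_one_add (s := ρ / r - 1)
    (by have := div_nonneg hρ hr0.le; linarith) hγ.le
  have e4 : (1 + (ρ / r - 1)) ^ γ = ρ ^ γ / r ^ γ := by
    rw [show 1 + (ρ / r - 1) = ρ / r by ring, Real.div_rpow hρ hr0.le]
  have hpos : 0 < r ^ γ := Real.rpow_pos_of_pos hr0 γ
  rw [e4, le_div_iff₀ hpos] at hB
  have e5 : (1 + γ * (ρ / r - 1)) * r ^ γ = r ^ γ + γ * r ^ (γ - 1) * (ρ - r) := by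
    rw [← e2]; field_simp
  rw [e5] at hB
  have hL : ρ * (γ * ρ ^ (γ - 1) - γ * r ^ (γ - 1))
              - r * (γ * (γ - 1) * r ^ (γ - 2)) * (ρ - r)
      = γ * (ρ ^ γ - r ^ γ - γ * r ^ (γ - 1) * (ρ - r)) := by
    linear_combination γ * e1 - γ * (γ - 1) * (ρ - r) * e3 - γ * e2
  rw [hL, abs_of_nonneg (mul_nonneg (by linarith) (by linarith))]
  apply le_of_eq
  field_simp
end
end

section
/- Let ν > 0, κ > 0, γ > 1, T > 0. Let ρ : [0,T] × ℝ³ → ℝ and u : [0,T] × ℝ³ → ℝ³ be smooth (C^∞) functions, ℤ³-periodic in the space variable, with ρ > 0 everywhere, satisfying pointwise the Navier–Stokes–Korteweg system ∂_t ρ + div(ρ u) = 0 and ∂_t(ρ u) + div(ρ u ⊗ u) + ∇(ρ^γ) − 2ν div(ρ Du) − 2κ² ρ ∇(Δρ) = 0. Define the energy E(t) = ∫_{[0,1]³} [ (1/2) ρ |u|² + ρ^γ/(γ−1) + κ² |∇ρ|² ] dx. Then E is differentiable on (0,T) and for every t ∈ (0,T): E'(t) = − 2ν ∫_{[0,1]³}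 ρ |Du|² dx, where |Du|² is the squared Frobenius norm of the symmetric gradient of u. -/
open scoped BigOperators
open MeasureTheory

noncomputable section

lemma pd_mul' {f g : V3 → ℝ} {x : V3} (i : Fin 3) (hf : DifferentiableAt ℝ f x) (hg : DifferentiableAt ℝ g x) :
    pd i (fun y => f y * g y) x = f x * pd i g x + g x * pd i f x := by
  simp [pd, fderiv_fun_mul hf hg]

lemma pd_add' {f g : V3 → ℝ} {x : V3} (i : Fin 3) (hf : DifferentiableAt ℝ f x) (hg : DifferentiableAt ℝ g x) :
    pd i (fun y => f y + g y) x = pd i f x + pd i g x := by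
  simp [pd, fderiv_fun_add hf hg]

lemma pd_cmul' {f : V3 → ℝ} {x : V3} (i : Fin 3) (c : ℝ) (hf : DifferentiableAt ℝ f x) :
    pd i (fun y => c * f y) x = c * pd i f x := by
  rw [pd, fderiv_const_mul hf]; simp [pd]

lemma ptwise (ν κ γ c p : ℝ) (hcg : c * (γ - 1) = γ) (r q L P : V3 → ℝ) (w g : Fin 3 → V3 → ℝ)
    (D : Fin 3 → Fin 3 → V3 → ℝ) (wt : Fin 3 → ℝ) (x : V3)
    (hr : DifferentiableAt ℝ r x) (hq : DifferentiableAt ℝ q x) (hL : DifferentiableAt ℝ L x)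
    (hP : DifferentiableAt ℝ P x) (hw : ∀ i, DifferentiableAt ℝ (w i) x)
    (hg : ∀ i, DifferentiableAt ℝ (g i) x) (hD : ∀ i j, DifferentiableAt ℝ (D i j) x)
    (hPx : P x = p * r x) (hPd : ∀ i, pd i P x = γ * p * pd i r x)
    (hgx : ∀ i, g i x = pd i r x)
    (hLx : L x = ∑ i, pd i (g i) x)
    (hDx : ∀ i j, D i j x = (pd j (w i) x + pd i (w j) x) / 2)
    (hc : q x + ∑ i, pd i (fun y => r y * w i y) x = 0)
    (hm : ∀ i, (q x * w i x + r x * wt i) + ∑ j, pd j (fun y => r y * w i y * w j y) x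
       + pd i P x - 2 * ν * ∑ j, pd j (fun y => r y * D i j y) x
       - 2 * κ ^ 2 * (r x * pd i L x) = 0) :
    1 / 2 * q x * (∑ i, w i x ^ 2) + r x * (∑ i, w i x * wt i) + c * p * q x
      + 2 * κ ^ 2 * (∑ i, g i x * pd i q x)
    = - (2 * ν) * (r x * ∑ i, ∑ j, D i j x ^ 2)
      + ∑ j, pd j (fun y => (-1 / 2) * (r y * (w 0 y * w 0 y + w 1 y * w 1 y + w 2 y * w 2 y) * w j y)
          + (-c) * (P y * w j y)
          + (2 * ν) * (r y * (w 0 y * D 0 j y + w 1 y * D 1 j y + w 2 y * D 2 j y))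
          + (2 * κ ^ 2) * (g j y * q y)
          + (2 * κ ^ 2) * (L y * (r y * w j y))) x := by
  have h0 := hm 0
  have h1 := hm 1
  have h2 := hm 2
  clear hm
  simp (disch := fun_prop) only [pd_cmul', pd_add', pd_mul', Fin.sum_univ_three, hPd] at h0 h1 h2 hc hLx ⊢
  simp only [hPx, hgx, hLx] at *
  simp only [hDx] at *
  linear_combination w 0 x * h0 + w 1 x * h1 + w 2 x * h2 +
    (-1/2 * (w 0 x ^2 + w 1 x ^2 + w 2 x^2) + c * p - 2 * κ^2 * (pd 0 (g 0) x + pd 1 (g 1) x + pd 2 (g 2) x)) * hc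
    + p * (w 0 x * pd 0 r x + w 1 x * pd 1 r x + w 2 x * pd 2 r x) * hcg

section st
variable {f : ℝ → V3 → ℝ}

lemma pd_eq (hf : ContDiff ℝ (⊤ : ℕ∞) (fun p : ℝ × V3 => f p.1 p.2)) (i : Fin 3) (t : ℝ) (x : V3) :
    pd i (f t) x = fderiv ℝ (fun p : ℝ × V3 => f p.1 p.2) (t, x) (0, Pi.single i 1) := by
  have h := (hf.differentiable (by simp) (t, x)).hasFDerivAt.comp x (hasFDerivAt_prodMk_right t x)
  have h2 := congrArg (fun L => L (Pi.single i 1)) h.fderiv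
  simp at h2
  exact h2

lemma hasDt (hf : ContDiff ℝ (⊤ : ℕ∞) (fun p : ℝ × V3 => f p.1 p.2)) (t : ℝ) (x : V3) :
    HasDerivAt (fun s => f s x) (fderiv ℝ (fun p : ℝ × V3 => f p.1 p.2) (t, x) (1, 0)) t := by
  have h := (hf.differentiable (by simp) (t, x)).hasFDerivAt.comp_hasDerivAt t
    ((hasDerivAt_id t).prodMk (hasDerivAt_const t x))
  exact h

lemma cd_dir (hf : ContDiff ℝ (⊤ : ℕ∞) (fun p : ℝ × V3 => f p.1 p.2)) (v : ℝ × V3) :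
    ContDiff ℝ (⊤ : ℕ∞) (fun p : ℝ × V3 => fderiv ℝ (fun p : ℝ × V3 => f p.1 p.2) p v) :=
  (hf.fderiv_right (by simp)).clm_apply contDiff_const

lemma cd_pd (hf : ContDiff ℝ (⊤ : ℕ∞) (fun p : ℝ × V3 => f p.1 p.2)) (i : Fin 3) :
    ContDiff ℝ (⊤ : ℕ∞) (fun p : ℝ × V3 => pd i (f p.1) p.2) := by
  simpa only [pd_eq hf] using cd_dir hf (0, Pi.single i 1)

lemma cd_dt (hf : ContDiff ℝ (⊤ : ℕ∞) (fun p : ℝ × V3 => f p.1 p.2)) :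
    ContDiff ℝ (⊤ : ℕ∞) (fun p : ℝ × V3 => deriv (fun s => f s p.2) p.1) := by
  simpa only [(hasDt hf _ _).deriv] using cd_dir hf (1, 0)

lemma cd_slice (hf : ContDiff ℝ (⊤ : ℕ∞) (fun p : ℝ × V3 => f p.1 p.2)) (t : ℝ) :
    ContDiff ℝ (⊤ : ℕ∞) (f t) := by
  exact hf.comp (contDiff_const.prodMk contDiff_id : ContDiff ℝ (⊤ : ℕ∞) (fun x : V3 => (t, x)))

lemma df_slice (hf : ContDiff ℝ (⊤ : ℕ∞) (fun p : ℝ × V3 => f p.1 p.2)) (t : ℝ) (x : V3) :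
    DifferentiableAt ℝ (f t) x := (cd_slice hf t).differentiable (by simp) x

lemma snd_dir {F : ℝ × V3 → ℝ} (hf : ContDiff ℝ (⊤ : ℕ∞) F) (v w a : ℝ × V3) :
    fderiv ℝ (fun p => fderiv ℝ F p v) a w = fderiv ℝ (fun p => fderiv ℝ F p w) a v := by
  have hd : DifferentiableAt ℝ (fderiv ℝ F) a :=
    (hf.fderiv_right (m := (⊤ : ℕ∞)) (by simp)).differentiable (by simp) a
  have hs : IsSymmSndFDerivAt ℝ F a := hf.contDiffAt.isSymmSndFDerivAt (by simp; exact WithTop.coe_le_coe.2 le_top)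
  rw [fderiv_clm_apply hd (by fun_prop), fderiv_clm_apply hd (by fun_prop)]
  simpa using hs.eq w v

lemma dt_pd (hf : ContDiff ℝ (⊤ : ℕ∞) (fun p : ℝ × V3 => f p.1 p.2)) (i : Fin 3) (t : ℝ) (x : V3) :
    HasDerivAt (fun s => pd i (f s) x) (pd i (fun y => deriv (fun s => f s y) t) x) t := by
  have h := hasDt (f := fun s x => pd i (f s) x) (cd_pd hf i) t x
  convert h using 1
  rw [pd_eq (f := fun t y => deriv (fun s => f s y) t) (cd_dt hf)]
  simp only [pd_eq hf, (hasDt hf _ _).deriv]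
  exact snd_dir hf _ _ _

lemma hasDerivAt_int (hf : ContDiff ℝ (⊤ : ℕ∞) (fun p : ℝ × V3 => f p.1 p.2)) (t : ℝ) :
    HasDerivAt (fun s => ∫ x in Set.Icc (0 : V3) 1, f s x)
      (∫ x in Set.Icc (0 : V3) 1, deriv (fun s => f s x) t) t := by
  have hc := (cd_dt hf).continuous
  obtain ⟨C, hC⟩ := ((isCompact_Icc (a := t - 1) (b := t + 1)).prod
    (isCompact_Icc (a := (0 : V3)) (b := 1))).exists_bound_of_continuousOn hc.continuousOn
  refine (hasDerivAt_integral_of_dominated_loc_of_deriv_le (μ := volume.restrict (Set.Icc (0 : V3) 1))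
    (F := f) (F' := fun s x => deriv (fun s => f s x) s) (bound := fun _ => C)
    (s := Set.Icc (t - 1) (t + 1)) (Icc_mem_nhds (by linarith) (by linarith)) ?_ ?_ ?_ ?_ ?_ ?_).2
  · exact Filter.Eventually.of_forall fun s => (cd_slice hf s).continuous.aestronglyMeasurable
  · exact (cd_slice hf t).continuous.continuousOn.integrableOn_compact isCompact_Icc
  · exact (cd_slice (f := fun s x => deriv (fun s => f s x) s) (cd_dt hf) t).continuous.aestronglyMeasurable
  · filter_upwards [ae_restrict_mem measurableSet_Icc] with x hx s hs
    exact hC (s, x) ⟨hs, hx⟩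
  · exact (continuousOn_const).integrableOn_compact isCompact_Icc
  · exact Filter.Eventually.of_forall fun x s _ => (hasDt hf s x).differentiableAt.hasDerivAt

end st

lemma int_div (F : Fin 3 → V3 → ℝ) (hF : ∀ i, ContDiff ℝ (⊤ : ℕ∞) (F i))
    (hper : ∀ i x (k : Fin 3 → ℤ), F i (x + fun j => (k j : ℝ)) = F i x) :
    ∫ x in Set.Icc (0 : V3) 1, ∑ i, pd i (F i) x = 0 := by
  have hint : Continuous (fun x => ∑ i, pd i (F i) x) := by
    refine continuous_finsetSum _ fun i _ => ?_
    exact ((hF i).continuous_fderiv (by simp)).clm_apply continuous_const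
  have := integral_divergence_of_hasFDerivAt_off_countable' (n := 2) (E := ℝ) 0 1 (fun i => by simp)
    F (fun i x => fderiv ℝ (F i) x) ∅ (by simp) (fun i => (hF i).continuous.continuousOn)
    (fun x _ i => ((hF i).differentiable (by simp) x).hasFDerivAt)
    (hint.continuousOn.integrableOn_compact isCompact_Icc)
  refine this.trans (Finset.sum_eq_zero fun i _ => ?_)
  rw [sub_eq_zero]
  refine integral_congr_ae (Filter.Eventually.of_forall fun y => ?_)
  dsimp only
  rw [← hper i (i.insertNth ((0 : V3) i) y) (Pi.single i 1)]
  congr 1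
  ext j
  refine Fin.succAboveCases i ?_ (fun j => ?_) j
  · simp
  · simp

lemma pd_per {f : V3 → ℝ} (h : ∀ x (k : Fin 3 → ℤ), f (x + fun j => (k j : ℝ)) = f x) (i : Fin 3)
    (x : V3) (k : Fin 3 → ℤ) : pd i f (x + fun j => (k j : ℝ)) = pd i f x := by
  unfold pd
  rw [← fderiv_comp_add_right]
  simp only [h]

/-- energy dissipation identity
`E'(t) = −2ν ∫ ρ |Du|²` for smooth periodic solutions of the
Navier–Stokes–Korteweg system. -/
theorem energy_dissipation
    (ν κ γ T : ℝ) (hν : 0 < ν) (hκ : 0 < κ) (hγ : 1 < γ) (hT : 0 < T)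
    (ρ : ℝ → V3 → ℝ) (u : ℝ → V3 → V3)
    (hρ : ContDiff ℝ (⊤ : ℕ∞) (fun p : ℝ × V3 => ρ p.1 p.2))
    (hu : ContDiff ℝ (⊤ : ℕ∞) (fun p : ℝ × V3 => u p.1 p.2))
    (hρper : ∀ t x (k : Fin 3 → ℤ), ρ t (x + fun i => (k i : ℝ)) = ρ t x)
    (huper : ∀ t x (k : Fin 3 → ℤ), u t (x + fun i => (k i : ℝ)) = u t x)
    (hpos : ∀ t x, 0 < ρ t x)
    (hcont : ∀ t ∈ Set.Icc (0 : ℝ) T, ∀ x,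
      deriv (fun s => ρ s x) t + vdiv (fun y => ρ t y • u t y) x = 0)
    (hmom : ∀ t ∈ Set.Icc (0 : ℝ) T, ∀ x,
      (fun i => deriv (fun s => ρ s x * u s x i) t)
        + mdiv (fun y i j => ρ t y * u t y i * u t y j) x
        + grad (fun y => ρ t y ^ γ) x
        - (2 * ν) • mdiv (fun y i j => ρ t y * symJ (u t) y i j) x
        - (2 * κ ^ 2) • (ρ t x • grad (fun y => lap (ρ t) y) x)
      = 0) :
    ∀ t ∈ Set.Ioo (0 : ℝ) T,
      HasDerivAt
        (fun s => ∫ x in Set.Icc (0 : V3) 1,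
          ((1 / 2) * ρ s x * normSq (u s x)
            + (ρ s x) ^ γ / (γ - 1)
            + κ ^ 2 * normSq (grad (ρ s) x)))
        (-(2 * ν) * ∫ x in Set.Icc (0 : V3) 1,
            ρ t x * ∑ i, ∑ j, (symJ (u t) x i j) ^ 2) t := by
  intro t ht
  have ht' : t ∈ Set.Icc (0 : ℝ) T := ⟨ht.1.le, ht.2.le⟩
  have hw : ∀ i, ContDiff ℝ (⊤ : ℕ∞) (fun p : ℝ × V3 => u p.1 p.2 i) := fun i => contDiff_pi.1 hu i
  have hg : ∀ i, ContDiff ℝ (⊤ : ℕ∞) (fun p : ℝ × V3 => pd i (ρ p.1) p.2) := fun i => cd_pd hρ i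
  have hP : ContDiff ℝ (⊤ : ℕ∞) (fun p : ℝ × V3 => ρ p.1 p.2 ^ γ) :=
    hρ.rpow_const_of_ne (fun p => (hpos _ _).ne')
  have hL : ContDiff ℝ (⊤ : ℕ∞) (fun p : ℝ × V3 => lap (ρ p.1) p.2) := by
    unfold lap
    exact ContDiff.sum fun i _ => cd_pd (f := fun s x => pd i (ρ s) x) (hg i) i
  have hJ : ∀ i j, ContDiff ℝ (⊤ : ℕ∞) (fun p : ℝ × V3 => pd j (fun y => u p.1 y i) p.2) :=
    fun i j => cd_pd (f := fun s x => u s x i) (hw i) j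
  have hD : ∀ i j, ContDiff ℝ (⊤ : ℕ∞) (fun p : ℝ × V3 => symJ (u p.1) p.2 i j) := by
    intro i j
    unfold symJ jacb
    exact ((hJ i j).add (hJ j i)).div_const 2
  have hq := cd_dt hρ
  have hE : ContDiff ℝ (⊤ : ℕ∞) (fun p : ℝ × V3 => (1 / 2) * ρ p.1 p.2 * normSq (u p.1 p.2)
            + (ρ p.1 p.2) ^ γ / (γ - 1)
            + κ ^ 2 * normSq (grad (ρ p.1) p.2)) := by
    unfold normSq grad
    refine (((contDiff_const.mul hρ).mul (ContDiff.sum fun i _ => (hw i).pow 2)).add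
      (hP.div_const _)).add (contDiff_const.mul (ContDiff.sum fun i _ => (hg i).pow 2))
  have hmain := hasDerivAt_int (f := fun s x => (1 / 2) * ρ s x * normSq (u s x)
            + (ρ s x) ^ γ / (γ - 1)
            + κ ^ 2 * normSq (grad (ρ s) x)) hE t
  let w : Fin 3 → V3 → ℝ := fun i y => u t y i
  let D : Fin 3 → Fin 3 → V3 → ℝ := fun i j y => symJ (u t) y i j
  let q : V3 → ℝ := fun y => deriv (fun s => ρ s y) t
  let F : Fin 3 → V3 → ℝ := fun j y =>
    (-1 / 2) * (ρ t y * (w 0 y * w 0 y + w 1 y * w 1 y + w 2 y * w 2 y) * w j y)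
          + (-(γ / (γ - 1))) * (ρ t y ^ γ * w j y)
          + (2 * ν) * (ρ t y * (w 0 y * D 0 j y + w 1 y * D 1 j y + w 2 y * D 2 j y))
          + (2 * κ ^ 2) * (pd j (ρ t) y * q y)
          + (2 * κ ^ 2) * (lap (ρ t) y * (ρ t y * w j y))
  have sρ : ContDiff ℝ (⊤ : ℕ∞) (ρ t) := cd_slice hρ t
  have sw : ∀ i, ContDiff ℝ (⊤ : ℕ∞) (w i) := fun i => cd_slice (f := fun s x => u s x i) (hw i) t
  have sD : ∀ i j, ContDiff ℝ (⊤ : ℕ∞) (D i j) :=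
    fun i j => cd_slice (f := fun s x => symJ (u s) x i j) (hD i j) t
  have sq : ContDiff ℝ (⊤ : ℕ∞) q := cd_slice (f := fun t x => deriv (fun s => ρ s x) t) hq t
  have sP : ContDiff ℝ (⊤ : ℕ∞) (fun y => ρ t y ^ γ) := cd_slice (f := fun s x => ρ s x ^ γ) hP t
  have sL : ContDiff ℝ (⊤ : ℕ∞) (fun y => lap (ρ t) y) := cd_slice (f := fun s x => lap (ρ s) x) hL t
  have sg : ∀ i, ContDiff ℝ (⊤ : ℕ∞) (fun y => pd i (ρ t) y) :=
    fun i => cd_slice (f := fun s x => pd i (ρ s) x) (hg i) t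
  have sF : ∀ i, ContDiff ℝ (⊤ : ℕ∞) (F i) := by
    intro j
    have h0 := sw 0
    have h1 := sw 1
    have h2 := sw 2
    have hj := sw j
    have d0 := sD 0 j
    have d1 := sD 1 j
    have d2 := sD 2 j
    have gj := sg j
    exact ((((contDiff_const.mul ((sρ.mul (((h0.mul h0).add (h1.mul h1)).add (h2.mul h2))).mul hj)).add
      (contDiff_const.mul (sP.mul hj))).add
      (contDiff_const.mul (sρ.mul (((h0.mul d0).add (h1.mul d1)).add (h2.mul d2))))).add
      (contDiff_const.mul (gj.mul sq))).add (contDiff_const.mul (sL.mul (sρ.mul hj)))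
  have pw : ∀ i x (k : Fin 3 → ℤ), w i (x + fun j => (k j : ℝ)) = w i x :=
    fun i x k => congrFun (huper t x k) i
  have pg : ∀ i x (k : Fin 3 → ℤ), pd i (ρ t) (x + fun j => (k j : ℝ)) = pd i (ρ t) x :=
    fun i => pd_per (hρper t) i
  have pq : ∀ x (k : Fin 3 → ℤ), q (x + fun j => (k j : ℝ)) = q x := by
    intro x k
    simp only [q, hρper]
  have pL : ∀ x (k : Fin 3 → ℤ), lap (ρ t) (x + fun j => (k j : ℝ)) = lap (ρ t) x := by
    intro x k
    unfold lap
    exact Finset.sum_congr rfl fun i _ => pd_per (f := fun y => pd i (ρ t) y) (pg i) i x k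
  have pD : ∀ i j x (k : Fin 3 → ℤ), D i j (x + fun j => (k j : ℝ)) = D i j x := by
    intro i j x k
    simp only [D, symJ, jacb]
    rw [pd_per (f := fun y => u t y i) (pw i) j x k, pd_per (f := fun y => u t y j) (pw j) i x k]
  have pF : ∀ i x (k : Fin 3 → ℤ), F i (x + fun j => (k j : ℝ)) = F i x := by
    intro i x k
    simp only [F, pw, pg, pq, pL, pD, hρper]
  have hdiv := int_div F sF pF
  have hγ' : γ - 1 ≠ 0 := by linarith
  have key : ∀ x, deriv (fun s => (1 / 2) * ρ s x * normSq (u s x)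
            + (ρ s x) ^ γ / (γ - 1)
            + κ ^ 2 * normSq (grad (ρ s) x)) t
      = -(2 * ν) * (ρ t x * ∑ i, ∑ j, (symJ (u t) x i j) ^ 2) + ∑ j, pd j (F j) x := by
    intro x
    have dρ : HasDerivAt (fun s => ρ s x) (q x) t := (hasDt hρ t x).differentiableAt.hasDerivAt
    have dw : ∀ i, HasDerivAt (fun s => u s x i) (deriv (fun s => u s x i) t) t := fun i =>
      (hasDt (f := fun s x => u s x i) (hw i) t x).differentiableAt.hasDerivAt
    have dg : ∀ i, HasDerivAt (fun s => pd i (ρ s) x) (pd i q x) t := fun i => dt_pd hρ i t x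
    have dE : HasDerivAt (fun s => (1 / 2) * ρ s x * normSq (u s x)
            + (ρ s x) ^ γ / (γ - 1)
            + κ ^ 2 * normSq (grad (ρ s) x)) _ t :=
      (((dρ.const_mul (1 / 2)).mul (HasDerivAt.fun_sum (u := Finset.univ) fun i _ => (dw i).pow 2)).add
        ((dρ.rpow_const (p := γ) (Or.inl (hpos t x).ne')).div_const (γ - 1))).add
        ((HasDerivAt.fun_sum (u := Finset.univ) fun i _ => (dg i).pow 2).const_mul (κ ^ 2))
    rw [dE.deriv]
    have hpt := ptwise ν κ γ (γ / (γ - 1)) (ρ t x ^ (γ - 1)) (by field_simp) (ρ t) q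
      (fun y => lap (ρ t) y) (fun y => ρ t y ^ γ) w (fun i y => pd i (ρ t) y) D
      (fun i => deriv (fun s => u s x i) t) x
      (sρ.differentiable (by simp) x) (sq.differentiable (by simp) x) (sL.differentiable (by simp) x)
      (sP.differentiable (by simp) x) (fun i => (sw i).differentiable (by simp) x)
      (fun i => (sg i).differentiable (by simp) x) (fun i j => (sD i j).differentiable (by simp) x)
      (by
        have := Real.rpow_add_one (hpos t x).ne' (γ - 1)
        simpa using this)
      (by
        intro i
        have := ((sρ.differentiable (by simp) x).hasFDerivAt.rpow_const (p := γ)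
          (Or.inl (hpos t x).ne')).fderiv
        simp only [pd, this]
        simp)
      (fun i => rfl) rfl (fun i j => rfl) (hcont t ht' x)
      (by
        intro i
        have h := congrFun (hmom t ht' x) i
        have h1 : deriv (fun s => ρ s x * u s x i) t = _ := (dρ.mul (dw i)).deriv
        simp only [Pi.add_apply, Pi.sub_apply, Pi.smul_apply, smul_eq_mul, h1] at h
        exact h)
    refine Eq.trans ?_ hpt
    simp only [Fin.sum_univ_three, w]
    simp
    field_simp
  have hint1 : IntegrableOn (fun x => -(2 * ν) * (ρ t x * ∑ i, ∑ j, (symJ (u t) x i j) ^ 2))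
      (Set.Icc (0 : V3) 1) := by
    refine Continuous.integrableOn_Icc ?_
    exact continuous_const.mul (sρ.continuous.mul (continuous_finsetSum _ fun i _ =>
      continuous_finsetSum _ fun j _ => (sD i j).continuous.pow 2))
  have hint2 : IntegrableOn (fun x => ∑ i, pd i (F i) x) (Set.Icc (0 : V3) 1) := by
    refine Continuous.integrableOn_Icc ?_
    refine continuous_finsetSum _ fun i _ => ?_
    exact ((sF i).continuous_fderiv (by simp)).clm_apply continuous_const
  convert hmain using 1
  simp only [key]
  rw [integral_add hint1 hint2, hdiv, add_zero, integral_const_mul]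
end
end

section
/- Let ν > 0, κ > 0, γ > 1, T > 0. Let ρ : [0,T] × ℝ³ → ℝ and u : [0,T] × ℝ³ → ℝ³ be smooth (C^∞) functions, ℤ³-periodic in the space variable, with ρ > 0 everywhere, satisfying pointwise the Navier–Stokes–Korteweg system ∂_t ρ + div(ρ u) = 0 and ∂_t(ρ u) + div(ρ u ⊗ u) + ∇(ρ^γ) − 2ν div(ρ Du) − 2κ² ρ ∇(Δρ) = 0. Let w = u + 2ν ∇(log ρ) be the effective velocity and define the BD-entropy F(t) = ∫_{[0,1]³} [ (1/2) ρ |w|² + ρ^γ/(γ−1) + κ² |∇ρ|² ] dx. Then F is differentiable on (0,T) and for every t ∈ (0,T): F'(t) = − 2ν ∫_{[0,1]³} [ ρ |Au|² + γ ρ^{γ−2} |∇ρ|² + 2κ² |Δρ|² ] dx, where |Au|² is the squared Frobenius norm of the antisymmetric part of the gradient of u. -/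
open scoped BigOperators
open MeasureTheory

noncomputable section

section Alg
variable {A : Type*} [CommRing A] [Algebra ℝ A]

lemma alg_kin (Dt : Derivation ℝ A A) (D : Fin 3 → Derivation ℝ A A)
    (hf R L c : A) (u w : Fin 3 → A) (hhf : 2 * hf = 1) (h1 : Dt hf = 0) (h2 : ∀ i, D i hf = 0)
    (hRt : Dt R = R * Dt L) (hR : ∀ i, D i R = R * D i L)
    (hc : c = Dt L + ∑ j, u j * D j L + ∑ j, D j (u j)) :
    Dt (hf * R * ∑ i, w i ^ 2) + ∑ j, D j (hf * R * (∑ i, w i ^ 2) * u j)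
      = hf * (∑ i, w i ^ 2) * R * c + ∑ i, w i * (R * (Dt (w i) + ∑ j, u j * D j (w i))) := by
  subst hc
  simp only [Fin.sum_univ_three, Derivation.leibniz, Derivation.leibniz_pow, map_add, smul_eq_mul,
    nsmul_eq_mul, h1, h2, hRt, hR]
  push_cast
  linear_combination (R * (w 0 * (Dt (w 0) + (u 0 * D 0 (w 0) + u 1 * D 1 (w 0) + u 2 * D 2 (w 0)))
    + w 1 * (Dt (w 1) + (u 0 * D 0 (w 1) + u 1 * D 1 (w 1) + u 2 * D 2 (w 1)))
    + w 2 * (Dt (w 2) + (u 0 * D 0 (w 2) + u 1 * D 1 (w 2) + u 2 * D 2 (w 2))))) * hhf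

lemma alg_mom (Dt : Derivation ℝ A A) (D : Fin 3 → Derivation ℝ A A)
    (hDt : ∀ i f, Dt (D i f) = D i (Dt f)) (hDD : ∀ i j f, D i (D j f) = D j (D i f))
    (hf n k R L P G c : A) (u : Fin 3 → A) (i : Fin 3)
    (hhf : 2 * hf = 1) (h2 : ∀ i, D i hf = 0) (hn : ∀ i, D i n = 0) (hnt : Dt n = 0)
    (hRt : Dt R = R * Dt L) (hR : ∀ i, D i R = R * D i L)
    (hc : c = Dt L + ∑ j, u j * D j L + ∑ j, D j (u j)) :
    R * (Dt (u i + 2 * n * D i L) + ∑ j, u j * D j (u i + 2 * n * D i L))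
      = (Dt (R * u i) + ∑ j, D j (R * u i * u j) + D i P
          - 2 * n * ∑ j, D j (R * (hf * (D j (u i) + D i (u j)))) - 2 * k * (R * D i G))
        - u i * R * c - D i P + 2 * n * ∑ j, D j (R * (hf * (D j (u i) - D i (u j))))
        + 2 * k * (R * D i G) + 2 * n * R * D i c := by
  have e2 : ∀ j, D j (2 : A) = 0 := fun j => by
    simpa using (D j).map_natCast 2
  have e2t : Dt (2 : A) = 0 := by simpa using Dt.map_natCast 2
  subst hc
  simp only [Fin.sum_univ_three, Derivation.leibniz, map_add, map_sub, smul_eq_mul,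
    h2, hRt, hR, hn, hnt, e2, e2t, hDt, hDD i]
  linear_combination (2 * n * ((R * D 0 L * D i (u 0) + R * D 0 (D i (u 0)))
    + (R * D 1 L * D i (u 1) + R * D 1 (D i (u 1)))
    + (R * D 2 L * D i (u 2) + R * D 2 (D i (u 2))))) * hhf

lemma alg_asym (D : Fin 3 → Derivation ℝ A A)
    (hDD : ∀ i j f, D i (D j f) = D j (D i f))
    (hf n R L : A) (u : Fin 3 → A)
    (hhf : 2 * hf = 1) (hn : ∀ i, D i n = 0) :
    ∑ i, (u i + 2 * n * D i L) * ∑ j, D j (R * (hf * (D j (u i) - D i (u j))))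
      = ∑ j, D j (∑ i, (u i + 2 * n * D i L) * (R * (hf * (D j (u i) - D i (u j)))))
        - R * ∑ i, ∑ j, (hf * (D j (u i) - D i (u j))) ^ 2 := by
  have e2 : ∀ j, D j (2 : A) = 0 := fun j => by
    simpa using (D j).map_natCast 2
  have key : ∀ i j : Fin 3, D j ((u i + 2 * n * D i L) * (R * (hf * (D j (u i) - D i (u j)))))
      = (u i + 2 * n * D i L) * D j (R * (hf * (D j (u i) - D i (u j))))
        + (D j (u i) + 2 * n * D j (D i L)) * (R * (hf * (D j (u i) - D i (u j)))) := by
    intro i j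
    rw [Derivation.leibniz]
    simp only [Derivation.leibniz, map_add, smul_eq_mul, hn, e2]
    ring
  simp only [map_sum, key]
  simp only [Fin.sum_univ_three]
  rw [hDD 1 0 L, hDD 2 0 L, hDD 2 1 L]
  linear_combination (R * hf * ((D 0 (u 1) - D 1 (u 0))^2 + (D 0 (u 2) - D 2 (u 0))^2
    + (D 1 (u 2) - D 2 (u 1))^2)) * hhf

lemma alg_press (Dt : Derivation ℝ A A) (D : Fin 3 → Derivation ℝ A A)
    (n g h R L P Q c : A) (u : Fin 3 → A)
    (hh : h * (g - 1) = 1) (ht : Dt h = 0) (hs : ∀ i, D i h = 0)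
    (hPt : Dt P = g * P * Dt L) (hP : ∀ i, D i P = g * P * D i L)
    (hR : ∀ i, D i R = R * D i L) (hQ : Q * R ^ 2 = P)
    (hc : c = Dt L + ∑ j, u j * D j L + ∑ j, D j (u j)) :
    Dt (P * h) - ∑ i, (u i + 2 * n * D i L) * D i P
      = ∑ j, D j (- (P * h * u j) - P * u j) + g * h * P * c
        - 2 * n * (g * Q * ∑ i, (D i R) ^ 2) := by
  subst hc
  simp only [Fin.sum_univ_three, Derivation.leibniz, map_sub, map_neg, smul_eq_mul,
    ht, hs, hPt, hP, hR]
  linear_combination (- P * (D 0 (u 0) + D 1 (u 1) + D 2 (u 2))) * hh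
    + (2 * n * g * (D 0 L ^ 2 + D 1 L ^ 2 + D 2 L ^ 2)) * hQ

lemma alg_kort (Dt : Derivation ℝ A A) (D : Fin 3 → Derivation ℝ A A)
    (hDt : ∀ i f, Dt (D i f) = D i (Dt f))
    (n k R L G c : A) (u : Fin 3 → A)
    (hn : ∀ i, D i n = 0) (hk : ∀ i, D i k = 0) (hkt : Dt k = 0)
    (hRt : Dt R = R * Dt L) (hR : ∀ i, D i R = R * D i L)
    (hG : G = ∑ i, D i (D i R))
    (hc : c = Dt L + ∑ j, u j * D j L + ∑ j, D j (u j)) :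
    Dt (k * ∑ i, (D i R) ^ 2) + ∑ i, (u i + 2 * n * D i L) * (2 * k * (R * D i G))
      = ∑ j, D j (2 * k * (D j R * Dt R) + 2 * k * (R * u j * G) + 4 * (n * k) * (D j R * G))
        - 2 * k * G * R * c - 2 * n * (2 * k * G ^ 2) := by
  have e2 : ∀ j, D j (2 : A) = 0 := fun j => by
    simpa using (D j).map_natCast 2
  have e4 : ∀ j, D j (4 : A) = 0 := fun j => by
    simpa using (D j).map_natCast 4
  have hRt' : R * Dt L = Dt R := hRt.symm
  have hG0 : D 0 (D 0 R) = G - D 1 (D 1 R) - D 2 (D 2 R) := by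
    rw [hG]; simp only [Fin.sum_univ_three]; ring
  clear hG
  subst hc
  simp only [Fin.sum_univ_three, Derivation.leibniz, Derivation.leibniz_pow, map_add, smul_eq_mul,
    nsmul_eq_mul, hn, hk, hkt, e2, e4, hDt, hG0]
  push_cast
  linear_combination (- 2 * k * G) * hRt - (2 * k * G * u 0 + 4*n*k * D 0 G) * hR 0
    - (2 * k * G * u 1 + 4*n*k * D 1 G) * hR 1 - (2 * k * G * u 2 + 4*n*k * D 2 G) * hR 2

lemma alg_main (Dt : Derivation ℝ A A) (D : Fin 3 → Derivation ℝ A A)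
    (hDt : ∀ i f, Dt (D i f) = D i (Dt f)) (hDD : ∀ i j f, D i (D j f) = D j (D i f))
    (hf n k g h R L P Q G c : A) (u w M : Fin 3 → A)
    (hhf : 2 * hf = 1) (hft : Dt hf = 0) (hfs : ∀ i, D i hf = 0)
    (hn : ∀ i, D i n = 0) (hnt : Dt n = 0)
    (hk : ∀ i, D i k = 0) (hkt : Dt k = 0)
    (hh : h * (g - 1) = 1) (ht : Dt h = 0) (hs : ∀ i, D i h = 0)
    (hRt : Dt R = R * Dt L) (hR : ∀ i, D i R = R * D i L)
    (hPt : Dt P = g * P * Dt L) (hP : ∀ i, D i P = g * P * D i L)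
    (hQ : Q * R ^ 2 = P)
    (hG : G = ∑ i, D i (D i R))
    (hc : c = Dt L + ∑ j, u j * D j L + ∑ j, D j (u j))
    (hw : ∀ i, w i = u i + 2 * n * D i L)
    (hM : ∀ i, M i = Dt (R * u i) + ∑ j, D j (R * u i * u j) + D i P
          - 2 * n * ∑ j, D j (R * (hf * (D j (u i) + D i (u j)))) - 2 * k * (R * D i G)) :
    ∃ Φ : Fin 3 → A,
    Dt (hf * R * ∑ i, w i ^ 2 + P * h + k * ∑ i, (D i R) ^ 2)
      = ∑ j, D j (Φ j) - 2 * n * (R * ∑ i, ∑ j, (hf * (D j (u i) - D i (u j))) ^ 2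
          + g * Q * ∑ i, (D i R) ^ 2 + 2 * k * G ^ 2)
        + ∑ i, w i * M i
        + (hf * (∑ i, w i ^ 2) * R - (∑ i, w i * u i) * R + g * h * P - 2 * k * G * R) * c
        + ∑ i, (2 * n * R * w i) * D i c := by
  have e2 : ∀ j, D j (2 : A) = 0 := fun j => by
    simpa using (D j).map_natCast 2
  have K := alg_kin Dt D hf R L c u w hhf hft hfs hRt hR hc
  have Mm := fun i => alg_mom Dt D hDt hDD hf n k R L P G c u i hhf hfs hn hnt hRt hR hc
  have S := alg_asym D hDD hf n R L u hhf hn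
  have Pr := alg_press Dt D n g h R L P Q c u hh ht hs hPt hP hR hQ hc
  have Ko := alg_kort Dt D hDt n k R L G c u hn hk hkt hRt hR hG hc
  simp only [← hw, ← hM] at Mm S Pr Ko
  refine ⟨fun j => -(hf * R * (∑ i, w i ^ 2) * u j)
    + 2 * n * (∑ i, w i * (R * (hf * (D j (u i) - D i (u j)))))
    + (- (P * h * u j) - P * u j)
    + (2 * k * (D j R * Dt R) + 2 * k * (R * u j * G) + 4 * (n * k) * (D j R * G)), ?_⟩
  have N : ∀ j X, D j (2 * n * X) = 2 * n * D j X := by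
    intro j X
    simp only [Derivation.leibniz, smul_eq_mul, hn, e2]; ring
  simp only [map_add, N, map_neg, Finset.sum_add_distrib, Finset.sum_neg_distrib, ← Finset.mul_sum]
  simp only [map_add, Finset.sum_add_distrib] at Ko
  simp only [Mm] at K
  generalize (∑ i, ∑ j, (hf * (D j (u i) - D i (u j))) ^ 2) = a1 at *
  generalize (∑ j, D j (∑ i, w i * (R * (hf * (D j (u i) - D i (u j)))))) = a2 at *
  simp only [Fin.sum_univ_three] at *
  linear_combination K + 2 * n * S + Pr + Ko

end Alg

section An
open scoped ContDiff

/-- smooth functions on space-time, periodic in space -/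
def SA : Subalgebra ℝ (ℝ × V3 → ℝ) where
  carrier := {f | ContDiff ℝ ∞ f ∧ ∀ t x (k : Fin 3 → ℤ), f (t, x + fun i => (k i : ℝ)) = f (t, x)}
  mul_mem' := fun ha hb => ⟨ha.1.mul hb.1, fun t x k => by simp [ha.2 t x k, hb.2 t x k]⟩
  add_mem' := fun ha hb => ⟨ha.1.add hb.1, fun t x k => by simp [ha.2 t x k, hb.2 t x k]⟩
  algebraMap_mem' := fun r => ⟨contDiff_const, fun t x k => rfl⟩

lemma SA_diff (f : SA) : Differentiable ℝ f.1 := f.2.1.differentiable (by simp)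

lemma dirD_mem (v : ℝ × V3) (f : SA) : (fun p => fderiv ℝ f.1 p v) ∈ SA := by
  refine ⟨(f.2.1.fderiv_right (m := ∞) (by simp)).clm_apply contDiff_const, fun t x k => ?_⟩
  have : f.1 = fun p => f.1 (p + ((0 : ℝ), (fun i => (k i : ℝ) : V3))) := by
    funext p
    have := f.2.2 p.1 p.2 k
    obtain ⟨a, b⟩ := p
    simpa using this.symm
  conv_rhs => rw [this]
  beta_reduce
  rw [fderiv_comp_add_right]
  simp

def dirD (v : ℝ × V3) : Derivation ℝ SA SA :=
  Derivation.mk'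
    { toFun := fun f => ⟨fun p => fderiv ℝ f.1 p v, dirD_mem v f⟩
      map_add' := fun f g => by
        ext p
        change fderiv ℝ (f.1 + g.1) p v = fderiv ℝ f.1 p v + fderiv ℝ g.1 p v
        rw [fderiv_add (SA_diff f p) (SA_diff g p)]; rfl
      map_smul' := fun r f => by
        ext p
        change fderiv ℝ (r • f.1) p v = r • fderiv ℝ f.1 p v
        rw [fderiv_const_smul (SA_diff f p)]; rfl }
    (fun f g => by
      ext p
      change fderiv ℝ (f.1 * g.1) p v = f.1 p * fderiv ℝ g.1 p v + g.1 p * fderiv ℝ f.1 p v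
      rw [fderiv_mul (SA_diff f p) (SA_diff g p)]; rfl)

lemma dirD_apply (v : ℝ × V3) (f : SA) (p : ℝ × V3) : (dirD v f).1 p = fderiv ℝ f.1 p v := rfl

lemma dirD_comm (v w : ℝ × V3) (f : SA) : dirD v (dirD w f) = dirD w (dirD v f) := by
  ext p
  have h1 : DifferentiableAt ℝ (fderiv ℝ f.1) p :=
    (f.2.1.fderiv_right (m := ∞) (by simp)).differentiable (by simp) p
  have key : ∀ a b : ℝ × V3, (dirD a (dirD b f)).1 p = fderiv ℝ (fderiv ℝ f.1) p a b := by
    intro a b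
    change fderiv ℝ (fun q => fderiv ℝ f.1 q b) p a = _
    rw [fderiv_clm_apply h1 (differentiableAt_const b)]
    simp
  rw [key, key]
  exact ((f.2.1.contDiffAt (x := p)).isSymmSndFDerivAt (by simp; exact ENat.LEInfty.out)) v w

def Dx (i : Fin 3) : Derivation ℝ SA SA := dirD (0, Pi.single i 1)
def Dtt : Derivation ℝ SA SA := dirD (1, 0)

lemma Dx_apply (i : Fin 3) (f : SA) (t : ℝ) (x : V3) :
    (Dx i f).1 (t, x) = pd i (fun y => f.1 (t, y)) x := by
  have h := (SA_diff f (t, x)).hasFDerivAt.comp x (hasFDerivAt_prodMk_right t x)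
  have h2 := h.fderiv
  change _ = fderiv ℝ (f.1 ∘ fun y => (t, y)) x _
  rw [h2]; rfl

lemma Dtt_hasDerivAt (f : SA) (t : ℝ) (x : V3) :
    HasDerivAt (fun s => f.1 (s, x)) ((Dtt f).1 (t, x)) t := by
  have h0 : HasFDerivAt f.1 (fderiv ℝ f.1 (t, x)) ((fun e : ℝ => (e, x)) t) :=
    (SA_diff f (t, x)).hasFDerivAt
  have h := h0.comp t (hasFDerivAt_prodMk_left (𝕜 := ℝ) t x)
  have h2 := h.hasDerivAt
  simp only [ContinuousLinearMap.comp_apply, ContinuousLinearMap.inl_apply] at h2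
  exact h2

lemma SA_cont (f : SA) : Continuous f.1 := f.2.1.continuous

lemma SA_slice_int (f : SA) (t : ℝ) :
    IntegrableOn (fun x => f.1 (t, x)) (Set.Icc (0 : V3) 1) :=
  ((SA_cont f).comp (by fun_prop : Continuous fun x : V3 => (t, x))).continuousOn.integrableOn_compact
    isCompact_Icc

lemma SA_int_deriv (f : SA) (t : ℝ) :
    HasDerivAt (fun s => ∫ x in Set.Icc (0 : V3) 1, f.1 (s, x))
      (∫ x in Set.Icc (0 : V3) 1, (Dtt f).1 (t, x)) t := by
  obtain ⟨C, hC⟩ := ((isCompact_Icc (a := t - 1) (b := t + 1)).prod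
    (isCompact_Icc (a := (0 : V3)) (b := 1))).exists_bound_of_continuousOn
    (SA_cont (Dtt f)).continuousOn
  refine (hasDerivAt_integral_of_dominated_loc_of_deriv_le (s := Set.Icc (t - 1) (t + 1))
    (bound := fun _ => C) (μ := volume.restrict (Set.Icc (0 : V3) 1))
    (F := fun s x => f.1 (s, x)) (F' := fun s x => (Dtt f).1 (s, x))
    (Icc_mem_nhds (by linarith) (by linarith)) ?_ (SA_slice_int f t) ?_ ?_ ?_ ?_).2
  · exact Filter.Eventually.of_forall fun s => (SA_slice_int f s).aestronglyMeasurable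
  · exact (SA_slice_int (Dtt f) t).aestronglyMeasurable
  · filter_upwards [ae_restrict_mem measurableSet_Icc] with x hx s hs
    exact hC (s, x) ⟨hs, hx⟩
  · exact (continuousOn_const (c := C)).integrableOn_compact isCompact_Icc
  · exact Filter.Eventually.of_forall fun x s _ => Dtt_hasDerivAt f s x

lemma SA_div (Φ : Fin 3 → SA) (t : ℝ) :
    ∫ x in Set.Icc (0 : V3) 1, (∑ j, Dx j (Φ j) : SA).1 (t, x) = 0 := by
  have h := integral_divergence_of_hasFDerivAt_off_countable' (n := 2) (E := ℝ) (0 : Fin 3 → ℝ) 1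
    (by intro i; simp) (fun j x => (Φ j).1 (t, x))
    (fun j x => (fderiv ℝ (Φ j).1 (t, x)).comp (ContinuousLinearMap.inr ℝ ℝ V3)) ∅ (by simp)
    (fun j => ((SA_cont (Φ j)).comp (by fun_prop : Continuous fun x : V3 => (t, x))).continuousOn)
    (fun x _ j => (SA_diff (Φ j) (t, x)).hasFDerivAt.comp x (hasFDerivAt_prodMk_right t x))
    (by
      have := SA_slice_int (∑ j, Dx j (Φ j)) t
      convert this using 2 with x
      simp [Dx, Fin.sum_univ_three, dirD_apply])
  have e : ∀ x : V3, (∑ j, Dx j (Φ j) : SA).1 (t, x) = ∑ j : Fin 3,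
    (fderiv ℝ (Φ j).1 (t, x)).comp (ContinuousLinearMap.inr ℝ ℝ V3) (Pi.single j 1) := by
    intro x
    simp [Dx, Fin.sum_univ_three, dirD_apply]
  simp only [e]
  rw [h]
  apply Finset.sum_eq_zero
  intro j _
  rw [sub_eq_zero]
  apply congrArg
  funext y
  have := (Φ j).2.2 t (j.insertNth ((0 : Fin 3 → ℝ) j) y) (Pi.single j 1)
  rw [← this]
  refine congrArg (fun z => (Φ j).1 (t, z)) ?_
  funext l
  refine Fin.succAboveCases j ?_ ?_ l
  · simp
  · intro m; simp

end An

section Main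
open scoped ContDiff

def ev (p : ℝ × V3) : SA →ₐ[ℝ] ℝ := (Pi.evalAlgHom ℝ (fun _ : ℝ × V3 => ℝ) p).comp SA.val

lemma ev_apply (p : ℝ × V3) (f : SA) : ev p f = f.1 p := rfl

lemma ev_Dx (i : Fin 3) (f : SA) (t : ℝ) (x : V3) :
    ev (t, x) (Dx i f) = pd i (fun y => ev (t, y) f) x := Dx_apply i f t x

lemma ev_Dtt (f : SA) (t : ℝ) (x : V3) :
    ev (t, x) (Dtt f) = deriv (fun s => ev (s, x) f) t := (Dtt_hasDerivAt f t x).deriv.symm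

lemma dirD_log (v : ℝ × V3) (R L : SA) (hpos : ∀ p, 0 < R.1 p) (hL : ∀ p, L.1 p = Real.log (R.1 p)) :
    dirD v R = R * dirD v L := by
  ext p
  change fderiv ℝ R.1 p v = R.1 p * fderiv ℝ L.1 p v
  have h : HasFDerivAt L.1 ((R.1 p)⁻¹ • fderiv ℝ R.1 p) p := by
    rw [show L.1 = fun p => Real.log (R.1 p) from funext hL]
    exact (SA_diff R p).hasFDerivAt.log (hpos p).ne'
  rw [h.fderiv]
  have := (hpos p).ne'
  simp
  field_simp

lemma dirD_rpow (γ : ℝ) (v : ℝ × V3) (R L P : SA) (hpos : ∀ p, 0 < R.1 p)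
    (hL : ∀ p, L.1 p = Real.log (R.1 p)) (hP : ∀ p, P.1 p = R.1 p ^ γ) :
    dirD v P = algebraMap ℝ SA γ * P * dirD v L := by
  have hl := dirD_log v R L hpos hL
  ext p
  have hl' := congrArg (ev p) hl
  rw [map_mul] at hl'
  change fderiv ℝ R.1 p v = R.1 p * fderiv ℝ L.1 p v at hl'
  change fderiv ℝ P.1 p v = γ * P.1 p * fderiv ℝ L.1 p v
  have h : HasFDerivAt P.1 ((γ * R.1 p ^ (γ - 1)) • fderiv ℝ R.1 p) p := by
    rw [show P.1 = fun p => R.1 p ^ γ from funext hP]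
    exact (SA_diff R p).hasFDerivAt.rpow_const (Or.inl (hpos p).ne')
  rw [h.fderiv, smul_apply, hl', hP p, Real.rpow_sub_one (hpos p).ne']
  have := (hpos p).ne'
  simp only [smul_eq_mul]
  field_simp

end Main


/-- BD-entropy dissipation identity
`F'(t) = −2ν ∫ [ρ|Au|² + γ ρ^(γ−2)|∇ρ|² + 2κ²|Δρ|²]` for smooth periodic
solutions of the Navier–Stokes–Korteweg system, where `w = u + 2ν∇log ρ`. -/
theorem BD_entropy_dissipation
    (ν κ γ T : ℝ) (hν : 0 < ν) (hκ : 0 < κ) (hγ : 1 < γ) (hT : 0 < T)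
    (ρ : ℝ → V3 → ℝ) (u : ℝ → V3 → V3)
    (hρ : ContDiff ℝ (⊤ : ℕ∞) (fun p : ℝ × V3 => ρ p.1 p.2))
    (hu : ContDiff ℝ (⊤ : ℕ∞) (fun p : ℝ × V3 => u p.1 p.2))
    (hρper : ∀ t x (k : Fin 3 → ℤ), ρ t (x + fun i => (k i : ℝ)) = ρ t x)
    (huper : ∀ t x (k : Fin 3 → ℤ), u t (x + fun i => (k i : ℝ)) = u t x)
    (hpos : ∀ t x, 0 < ρ t x)
    (hcont : ∀ t ∈ Set.Icc (0 : ℝ) T, ∀ x,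
      deriv (fun s => ρ s x) t + vdiv (fun y => ρ t y • u t y) x = 0)
    (hmom : ∀ t ∈ Set.Icc (0 : ℝ) T, ∀ x,
      (fun i => deriv (fun s => ρ s x * u s x i) t)
        + mdiv (fun y i j => ρ t y * u t y i * u t y j) x
        + grad (fun y => ρ t y ^ γ) x
        - (2 * ν) • mdiv (fun y i j => ρ t y * symJ (u t) y i j) x
        - (2 * κ ^ 2) • (ρ t x • grad (fun y => lap (ρ t) y) x)
      = 0)
    (w : ℝ → V3 → V3)
    (hw : ∀ t x, w t x = u t x + (2 * ν) • grad (fun y => Real.log (ρ t y)) x) :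
    ∀ t ∈ Set.Ioo (0 : ℝ) T,
      HasDerivAt
        (fun s => ∫ x in Set.Icc (0 : V3) 1,
          ((1 / 2) * ρ s x * normSq (w s x)
            + (ρ s x) ^ γ / (γ - 1)
            + κ ^ 2 * normSq (grad (ρ s) x)))
        (-(2 * ν) * ∫ x in Set.Icc (0 : V3) 1,
            (ρ t x * ∑ i, ∑ j, (asymJ (u t) x i j) ^ 2
              + γ * (ρ t x) ^ (γ - 2) * normSq (grad (ρ t) x)
              + 2 * κ ^ 2 * (lap (ρ t) x) ^ 2)) t := by
  classical
  have hup : ∀ i, ContDiff ℝ (⊤ : ℕ∞) (fun p : ℝ × V3 => u p.1 p.2 i) := contDiff_pi.1 hu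
  have hne : ∀ p : ℝ × V3, ρ p.1 p.2 ≠ 0 := fun p => (hpos p.1 p.2).ne'
  obtain ⟨R, hRe⟩ : ∃ R : SA, ∀ p, ev p R = ρ p.1 p.2 :=
    ⟨⟨fun p => ρ p.1 p.2, hρ, fun t x k => hρper t x k⟩, fun p => rfl⟩
  obtain ⟨L, hLe⟩ : ∃ L : SA, ∀ p, ev p L = Real.log (ρ p.1 p.2) :=
    ⟨⟨fun p => Real.log (ρ p.1 p.2), hρ.log hne, fun t x k => by simp only [hρper t x k]⟩,
      fun p => rfl⟩
  obtain ⟨P, hPe⟩ : ∃ P : SA, ∀ p, ev p P = ρ p.1 p.2 ^ γ :=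
    ⟨⟨fun p => ρ p.1 p.2 ^ γ, hρ.rpow_const_of_ne hne, fun t x k => by simp only [hρper t x k]⟩,
      fun p => rfl⟩
  obtain ⟨Q, hQe⟩ : ∃ Q : SA, ∀ p, ev p Q = ρ p.1 p.2 ^ (γ - 2) :=
    ⟨⟨fun p => ρ p.1 p.2 ^ (γ - 2), hρ.rpow_const_of_ne hne,
      fun t x k => by simp only [hρper t x k]⟩, fun p => rfl⟩
  obtain ⟨U, hUe⟩ : ∃ U : Fin 3 → SA, ∀ i p, ev p (U i) = u p.1 p.2 i :=
    ⟨fun i => ⟨fun p => u p.1 p.2 i, hup i, fun t x k => by simp only [huper t x k]⟩,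
      fun i p => rfl⟩
  have hRpos : ∀ p, 0 < R.1 p := fun p => by
    have := hpos p.1 p.2
    rw [← hRe] at this; exact this
  have hLR : ∀ p, L.1 p = Real.log (R.1 p) := fun p => by
    have := hLe p
    rw [← hRe] at this; exact this
  have hPR : ∀ p, P.1 p = R.1 p ^ γ := fun p => by
    have := hPe p
    rw [← hRe] at this; exact this
  have hQP : Q * R ^ 2 = P := by
    ext p
    change ev p (Q * R ^ 2) = ev p P
    rw [map_mul, map_pow, hQe, hPe, hRe, ← Real.rpow_natCast, ← Real.rpow_add (hpos _ _)]
    norm_num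
  set cst := algebraMap ℝ SA with hcst
  have hce : ∀ p r, ev p (cst r) = r := fun p r => rfl
  have hDc : ∀ v r, dirD v (cst r) = 0 := fun v r => (dirD v).map_algebraMap r
  obtain ⟨c, hc⟩ : ∃ c : SA, c = Dtt L + ∑ j, U j * Dx j L + ∑ j, Dx j (U j) := ⟨_, rfl⟩
  obtain ⟨G, hG⟩ : ∃ G : SA, G = ∑ i, Dx i (Dx i R) := ⟨_, rfl⟩
  obtain ⟨W, hW⟩ : ∃ W : Fin 3 → SA, ∀ i, W i = U i + 2 * cst ν * Dx i L := ⟨_, fun i => rfl⟩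
  obtain ⟨M, hM⟩ : ∃ M : Fin 3 → SA, ∀ i, M i = Dtt (R * U i) + ∑ j, Dx j (R * U i * U j) + Dx i P
          - 2 * cst ν * ∑ j, Dx j (R * (cst (1/2) * (Dx j (U i) + Dx i (U j))))
          - 2 * cst (κ^2) * (R * Dx i G) := ⟨_, fun i => rfl⟩
  have hRt : Dtt R = R * Dtt L := dirD_log _ R L hRpos hLR
  have hRx : ∀ i, Dx i R = R * Dx i L := fun i => dirD_log _ R L hRpos hLR
  have hg : γ - 1 ≠ 0 := by linarith
  obtain ⟨Φ, hΦ⟩ := alg_main Dtt Dx (fun i f => dirD_comm _ _ f) (fun i j f => dirD_comm _ _ f)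
    (cst (1/2)) (cst ν) (cst (κ^2)) (cst γ) (cst (1/(γ-1))) R L P Q G c U W M
    (by rw [← map_ofNat cst 2, ← map_mul]; norm_num) (hDc _ _) (fun i => hDc _ _)
    (fun i => hDc _ _) (hDc _ _) (fun i => hDc _ _) (hDc _ _)
    (by rw [← map_one cst, ← map_sub, ← map_mul]; congr 1; field_simp)
    (hDc _ _) (fun i => hDc _ _) hRt hRx
    (dirD_rpow γ _ R L P hRpos hLR hPR) (fun i => dirD_rpow γ _ R L P hRpos hLR hPR)
    hQP hG hc hW hM
  have hRc : R * c = Dtt R + ∑ j, Dx j (R * U j) := by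
    simp only [hc, Fin.sum_univ_three, Derivation.leibniz, smul_eq_mul, hRt, hRx]
    ring
  -- translations
  have eRx : ∀ i t x, ev (t, x) (Dx i R) = pd i (ρ t) x := fun i t x => by
    rw [ev_Dx]; simp only [hRe]
  have eG : ∀ t x, ev (t, x) G = lap (ρ t) x := fun t x => by
    rw [hG, map_sum]; unfold lap
    refine Finset.sum_congr rfl fun i _ => ?_
    rw [ev_Dx]; simp only [eRx]
  have eU : ∀ i j t x, ev (t, x) (Dx j (U i)) = jacb (u t) x i j := fun i j t x => by
    rw [ev_Dx]; simp only [hUe]; rfl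
  have eW : ∀ i t x, ev (t, x) (W i) = w t x i := fun i t x => by
    rw [hW, hw, map_add, map_mul, map_mul, hUe, hce, ev_Dx]
    simp only [hLe, map_ofNat]; rfl
  have hhalf : ∀ a : ℝ, 1 / 2 * a = a / 2 := fun a => by ring
  intro t ht
  have ht' : t ∈ Set.Icc (0 : ℝ) T := ⟨ht.1.le, ht.2.le⟩
  have c0 : ∀ x, ev (t, x) c = 0 := fun x => by
    have h1 := congrArg (ev (t, x)) hRc
    have h2 := hcont t ht' x
    have h3 : ev (t, x) (Dtt R + ∑ j, Dx j (R * U j)) = 0 := by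
      rw [← h2, map_add, map_sum, ev_Dtt]
      simp only [ev_Dx, map_mul, hRe, hUe]
      rfl
    rw [h3, map_mul, hRe] at h1
    exact (mul_eq_zero.1 h1).resolve_left (hne (t, x))
  have c1 : ∀ i x, ev (t, x) (Dx i c) = 0 := fun i x => by
    rw [ev_Dx]; simp only [c0]; simp [pd]
  have M0 : ∀ i x, ev (t, x) (M i) = 0 := fun i x => by
    have h := congrFun (hmom t ht' x) i
    rw [hM]
    refine Eq.trans ?_ h
    simp only [map_add, map_sub, map_mul, map_sum, ev_Dx, ev_Dtt, hRe, hUe, hPe, hce, eG, map_ofNat]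
    simp only [Pi.add_apply, Pi.sub_apply, Pi.smul_apply, smul_eq_mul, mdiv, grad, symJ, jacb]
    congr 6
    simp only [hhalf]
  have key := SA_int_deriv (cst (1/2) * R * ∑ i, W i ^ 2 + P * cst (1/(γ-1))
    + cst (κ^2) * ∑ i, (Dx i R) ^ 2) t
  rw [hΦ] at key
  simp only [← ev_apply] at key
  convert key using 1
  · funext s
    congr 1
    funext x
    simp only [map_add, map_mul, map_sum, map_pow, hce, hRe, hPe, eW, eRx, normSq, grad]
    ring
  · have hS := SA_div Φ t
    have hI := SA_slice_int (∑ j, Dx j (Φ j)) t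
    have hJ := SA_slice_int (2 * cst ν * (R * ∑ i, ∑ j, (cst (1/2) * (Dx j (U i) - Dx i (U j))) ^ 2
          + cst γ * Q * ∑ i, (Dx i R) ^ 2 + 2 * cst (κ^2) * G ^ 2)) t
    simp only [← ev_apply] at hS hI hJ
    have hsub := integral_sub hI hJ
    rw [hS, zero_sub] at hsub
    rw [neg_mul, ← integral_const_mul]
    refine Eq.trans ?_ (hsub.symm.trans ?_)
    · congr 2
      funext x
      simp only [map_add, map_sub, map_mul, map_sum, map_pow, hce, hRe, hQe, eG, eU, eRx, map_ofNat,
        normSq, grad, asymJ]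
      congr 4
      simp only [hhalf]
    · congr 1
      funext x
      simp only [map_add, map_sub, map_mul, map_sum, c0, c1, M0]
      simp
end
end
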